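/- (Theorem 4, relation for OUc) Let n ≥ 1 and g ≥ 0, and let U_g be the set of genus-g elements of the coset U = β·C_ρ in S_{2n}. Write N(T) for the number of equivalence classes of U_g under the equivalence relation generated by σ ≈ β²·σ·β⁻² together with σ ≈ t(σ) for each map t in the set T, where the possible maps are the mirror σ ↦ σ·ρ and the swap σ ↦ β⁻¹·ρ·σ⁻¹·β. Then: if n is even, N({mirror}) = 2·N({mirror, swap}); and if n is odd, N({mirror}) = N({swap}). -/

import Mathlib

/-- The fixed-point-free involution of `Fin (2n)` pairing `2k` with `2k+1`. -/
def rho (n : ℕ) : Equiv.Perm (Fin (2 * n)) :=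
  Function.Involutive.toPerm
    (fun x => ⟨if x.val % 2 = 0 then x.val + 1 else x.val - 1, by
      have := x.isLt; split_ifs with h <;> omega⟩)
    (by
      intro x
      have hx := x.isLt
      apply Fin.ext
      dsimp only
      split_ifs <;> omega)

/-- The number of cycles of a permutation of `Fin (2n)`, counting fixed points. -/
def numCycles (n : ℕ) (x : Equiv.Perm (Fin (2 * n))) : ℕ :=
  Multiset.card x.cycleType + (2 * n - x.support.card)

/-- The genus-`g` part of the coset `U = β·C_ρ`. -/
def Ugen (n g : ℕ) : Set (Equiv.Perm (Fin (2 * n))) :=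
  {σ | (∃ ξ ∈ Subgroup.centralizer {rho n}, σ = finRotate (2 * n) * ξ) ∧
       numCycles n σ + numCycles n (σ * rho n) + 2 * g = n + 2}

/-- The number of equivalence classes of a set `s` of permutations under the smallest
equivalence relation identifying `σ` with `f σ` for every `f` in `F`. -/
noncomputable def numClasses (n : ℕ) (s : Set (Equiv.Perm (Fin (2 * n))))
    (F : Set (Equiv.Perm (Fin (2 * n)) → Equiv.Perm (Fin (2 * n)))) : ℕ :=
  Nat.card (Quot (fun a b : s => ∃ f ∈ F, (b : Equiv.Perm (Fin (2 * n))) = f a))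

/-- Conjugation by `β²`. -/
def conjB2 (n : ℕ) : Equiv.Perm (Fin (2 * n)) → Equiv.Perm (Fin (2 * n)) :=
  fun σ => finRotate (2 * n) ^ 2 * σ * (finRotate (2 * n) ^ 2)⁻¹

/-- The swap map `σ ↦ β⁻¹·ρ·σ⁻¹·β`. -/
def swapMap (n : ℕ) : Equiv.Perm (Fin (2 * n)) → Equiv.Perm (Fin (2 * n)) :=
  fun σ => (finRotate (2 * n))⁻¹ * rho n * σ⁻¹ * finRotate (2 * n)

/-- The mirror map `σ ↦ σ·ρ`. -/
def mirrorMap (n : ℕ) : Equiv.Perm (Fin (2 * n)) → Equiv.Perm (Fin (2 * n)) :=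
  fun σ => σ * rho n

open Equiv

theorem card_quot_two {X : Type*} [Finite X] (R R' : X → X → Prop) (t : X → X) (I : X → ℤˣ)
    (hR' : ∀ a b, R' a b ↔ (R a b ∨ b = t a))
    (ht : ∀ a b, R a b → Quot.mk R (t a) = Quot.mk R (t b))
    (htt : ∀ a, Quot.mk R (t (t a)) = Quot.mk R a)
    (hI : ∀ a b, R a b → I a = I b) (hIt : ∀ a, I (t a) = - I a) :
    Nat.card (Quot R) = 2 * Nat.card (Quot R') := by
  classical
  have : Fintype X := Fintype.ofFinite X
  have : Fintype (Quot R) := Fintype.ofFinite _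
  have : Fintype (Quot R') := Fintype.ofFinite _
  have hne : ∀ a, Quot.mk R (t a) ≠ Quot.mk R a := by
    intro a h
    have h2 := congrArg (Quot.lift I hI) h
    change I (t a) = I a at h2
    rw [hIt] at h2
    rcases Int.units_eq_one_or (I a) with h3 | h3 <;> rw [h3] at h2 <;> revert h2 <;> decide
  let P : Quot R → Quot R' := Quot.lift (Quot.mk R')
    (fun a b h => Quot.sound ((hR' a b).2 (Or.inl h)))
  let S : Quot R' → Sym2 (Quot R) := Quot.lift (fun a => s(Quot.mk R a, Quot.mk R (t a))) (by
    intro a b h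
    rcases (hR' a b).1 h with h | h
    · simp only [Quot.sound h, ht a b h]
    · subst h
      simp only [htt]
      exact Sym2.eq_swap)
  rw [Nat.card_eq_fintype_card, Nat.card_eq_fintype_card, ← Finset.card_univ,
    Finset.card_eq_sum_card_fiberwise (f := P) (t := Finset.univ) (fun _ _ => Finset.mem_coe.2 (Finset.mem_univ _))]
  rw [Finset.sum_congr rfl (g := fun _ => 2)]
  · simp [mul_comm]
  · intro q _
    obtain ⟨a, rfl⟩ := Quot.exists_rep q
    have : Finset.univ.filter (fun x => P x = Quot.mk R' a) = {Quot.mk R a, Quot.mk R (t a)} := by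
      ext x
      obtain ⟨b, rfl⟩ := Quot.exists_rep x
      simp only [Finset.mem_filter, Finset.mem_univ, true_and, Finset.mem_insert,
        Finset.mem_singleton]
      constructor
      · intro h
        have h2 := congrArg S h
        change s(Quot.mk R b, Quot.mk R (t b)) = s(Quot.mk R a, Quot.mk R (t a)) at h2
        rw [Sym2.eq_iff] at h2
        rcases h2 with h2 | h2
        · exact Or.inl h2.1
        · exact Or.inr h2.1
      · have h0 : Quot.mk R' a = Quot.mk R' (t a) := Quot.sound ((hR' _ _).2 (Or.inr rfl))
        rintro (h | h)
        · rw [h]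
        · rw [h, h0]
    rw [this, Finset.card_pair (hne a).symm]

theorem rho_val (n : ℕ) (x : Fin (2 * n)) :
    (rho n x).val = if x.val % 2 = 0 then x.val + 1 else x.val - 1 := rfl

theorem rho_mul_self (n : ℕ) : rho n * rho n = 1 := by
  ext x
  simp only [Perm.mul_apply, rho_val, Perm.one_apply]
  have := x.isLt
  split_ifs <;> omega

theorem finRotate_val (n : ℕ) (x : Fin n) :
    (finRotate n x).val = if x.val + 1 = n then 0 else x.val + 1 := by
  cases n with
  | zero => exact x.elim0
  | succ m =>
    rw [coe_finRotate]
    simp only [Fin.ext_iff, Fin.val_last, Nat.add_right_cancel_iff]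

theorem beta_sq_rho (n : ℕ) :
    finRotate (2 * n) ^ 2 * rho n = rho n * finRotate (2 * n) ^ 2 := by
  ext x
  simp only [pow_two, Perm.mul_apply, rho_val, finRotate_val]
  have := x.isLt
  split_ifs <;> omega

theorem sign_rho (n : ℕ) : Perm.sign (rho n) = (-1) ^ n := by
  have h2 : ∀ k ∈ (rho n).cycleType, k = 2 := by
    intro k hk
    have h1 := Perm.dvd_of_mem_cycleType hk
    have h3 : orderOf (rho n) ∣ 2 := orderOf_dvd_of_pow_eq_one (by rw [pow_two, rho_mul_self])
    have h4 := Nat.le_of_dvd (by norm_num) (h1.trans h3)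
    have h5 := Perm.two_le_of_mem_cycleType hk
    omega
  have hs : (rho n).support = Finset.univ := by
    ext x
    simp only [Perm.mem_support, Finset.mem_univ, iff_true, ne_eq, Fin.ext_iff, rho_val]
    split_ifs <;> omega
  have h3 := (rho n).sum_cycleType
  rw [hs, Finset.card_univ, Fintype.card_fin] at h3
  have h4 := Multiset.eq_replicate_card.2 h2
  have h5 : (rho n).cycleType.card = n := by
    rw [h4] at h3
    simp at h3
    omega
  rw [Perm.sign_of_cycleType, h3, h5, pow_add, pow_mul]
  simp

theorem numCycles_inv (n : ℕ) (x : Perm (Fin (2 * n))) : numCycles n x⁻¹ = numCycles n x := by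
  unfold numCycles
  rw [Perm.cycleType_inv, Perm.support_inv]

theorem numCycles_conj (n : ℕ) (y x : Perm (Fin (2 * n))) :
    numCycles n (y * x * y⁻¹) = numCycles n x := by
  unfold numCycles
  rw [Perm.cycleType_conj, Perm.card_support_conj]

theorem numCycles_conj' (n : ℕ) (y x : Perm (Fin (2 * n))) :
    numCycles n (y⁻¹ * x * y) = numCycles n x := by
  simpa using numCycles_conj n y⁻¹ x

/-- The coset `β·C_ρ`, as a relation. -/
theorem Ugen_iff (n g : ℕ) (σ : Perm (Fin (2 * n))) :
    σ ∈ Ugen n g ↔ rho n * ((finRotate (2 * n))⁻¹ * σ) = ((finRotate (2 * n))⁻¹ * σ) * rho n ∧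
      numCycles n σ + numCycles n (σ * rho n) + 2 * g = n + 2 := by
  unfold Ugen
  simp only [Set.mem_ofPred_eq, Subgroup.mem_centralizer_singleton_iff]
  refine and_congr_left fun _ => ⟨?_, ?_⟩
  · rintro ⟨ξ, h, rfl⟩
    simpa using h.symm
  · intro h
    exact ⟨_, h.symm, by simp⟩

section group
variable {G : Type*} [Group G] (b r a : G)

theorem g_rinv (hr : r * r = 1) : r⁻¹ = r := inv_eq_of_mul_eq_one_left hr

theorem g_conj (hb : b ^ 2 * r = r * b ^ 2) (ha : r * (b⁻¹ * a) = (b⁻¹ * a) * r) :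
    r * (b⁻¹ * (b ^ 2 * a * (b ^ 2)⁻¹)) = (b⁻¹ * (b ^ 2 * a * (b ^ 2)⁻¹)) * r := by
  have h1 : b⁻¹ * (b ^ 2 * a * (b ^ 2)⁻¹) = b ^ 2 * (b⁻¹ * a) * (b ^ 2)⁻¹ := by group
  rw [h1]
  have c1 : Commute r (b ^ 2) := hb.symm
  have c2 : Commute r (b⁻¹ * a) := ha
  exact ((c1.mul_right c2).mul_right c1.inv_right)

theorem g_swap_eq : b⁻¹ * (b⁻¹ * r * a⁻¹ * b) = (b ^ 2)⁻¹ * r * (b⁻¹ * a)⁻¹ := by group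

theorem g_swap (hb : b ^ 2 * r = r * b ^ 2) (ha : r * (b⁻¹ * a) = (b⁻¹ * a) * r) :
    r * (b⁻¹ * (b⁻¹ * r * a⁻¹ * b)) = (b⁻¹ * (b⁻¹ * r * a⁻¹ * b)) * r := by
  rw [g_swap_eq]
  have c1 : Commute r (b ^ 2) := hb.symm
  have c2 : Commute r (b⁻¹ * a) := ha
  exact ((c1.inv_right.mul_right (Commute.refl r)).mul_right c2.inv_right)

theorem g_mirror (ha : r * (b⁻¹ * a) = (b⁻¹ * a) * r) :
    r * (b⁻¹ * (a * r)) = (b⁻¹ * (a * r)) * r := by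
  rw [← mul_assoc b⁻¹]
  have c2 : Commute r (b⁻¹ * a) := ha
  exact c2.mul_right (Commute.refl r)

theorem g_conj_mirror (hb : b ^ 2 * r = r * b ^ 2) :
    b ^ 2 * (a * r) * (b ^ 2)⁻¹ = (b ^ 2 * a * (b ^ 2)⁻¹) * r := by
  have c1 : Commute r (b ^ 2) := hb.symm
  have := c1.inv_right.eq
  simp only [mul_assoc, this]

/-- mirror after swap -/
theorem g_swap_r (hr : r * r = 1) (ha : r * (b⁻¹ * a) = (b⁻¹ * a) * r) :
    (b⁻¹ * r * a⁻¹ * b) * r = b⁻¹ * a⁻¹ * b := by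
  have c2 : Commute r (b⁻¹ * a) := ha
  have h : (b⁻¹ * a)⁻¹ * r = r * (b⁻¹ * a)⁻¹ := c2.inv_right.eq.symm
  calc (b⁻¹ * r * a⁻¹ * b) * r = b⁻¹ * r * ((b⁻¹ * a)⁻¹ * r) := by group
    _ = b⁻¹ * (r * r) * (b⁻¹ * a)⁻¹ := by rw [h]; group
    _ = _ := by rw [hr]; group

theorem g_swap_mirror (hr : r * r = 1) (ha : r * (b⁻¹ * a) = (b⁻¹ * a) * r) :
    b⁻¹ * r * (a * r)⁻¹ * b = (b⁻¹ * r * a⁻¹ * b) * r := by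
  rw [g_swap_r b r a hr ha, mul_inv_rev, g_rinv r hr]
  calc _ = b⁻¹ * (r * r) * a⁻¹ * b := by group
    _ = _ := by rw [hr]; group

theorem g_swap_conj (hb : b ^ 2 * r = r * b ^ 2) :
    b⁻¹ * r * (b ^ 2 * a * (b ^ 2)⁻¹)⁻¹ * b = b ^ 2 * (b⁻¹ * r * a⁻¹ * b) * (b ^ 2)⁻¹ := by
  calc _ = b⁻¹ * (r * b ^ 2) * a⁻¹ * (b ^ 2)⁻¹ * b := by group
    _ = b⁻¹ * (b ^ 2 * r) * a⁻¹ * (b ^ 2)⁻¹ * b := by rw [hb]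
    _ = _ := by group

theorem g_swap_swap (hr : r * r = 1) (ha : r * (b⁻¹ * a) = (b⁻¹ * a) * r) :
    b ^ 2 * (b⁻¹ * r * (b⁻¹ * r * a⁻¹ * b)⁻¹ * b) * (b ^ 2)⁻¹ = a := by
  calc _ = b * r * ((b⁻¹ * a) * r⁻¹) * b * b * (b ^ 2)⁻¹ := by group
    _ = b * r * (r * (b⁻¹ * a)) * b * b * (b ^ 2)⁻¹ := by rw [g_rinv r hr, ← ha]
    _ = b * (r * r) * (b⁻¹ * a) := by group
    _ = a := by rw [hr]; group
end group

theorem conj_mem {n g : ℕ} {σ : Perm (Fin (2 * n))} (h : σ ∈ Ugen n g) :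
    conjB2 n σ ∈ Ugen n g := by
  rw [Ugen_iff] at *
  refine ⟨g_conj _ _ _ (beta_sq_rho n) h.1, ?_⟩
  unfold conjB2
  rw [← g_conj_mirror _ _ _ (beta_sq_rho n), numCycles_conj, numCycles_conj]
  exact h.2

theorem mirror_mem {n g : ℕ} {σ : Perm (Fin (2 * n))} (h : σ ∈ Ugen n g) :
    mirrorMap n σ ∈ Ugen n g := by
  rw [Ugen_iff] at *
  refine ⟨g_mirror _ _ _ h.1, ?_⟩
  unfold mirrorMap
  rw [mul_assoc, rho_mul_self, mul_one, add_comm (numCycles _ _)]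
  exact h.2

theorem swap_mem {n g : ℕ} {σ : Perm (Fin (2 * n))} (h : σ ∈ Ugen n g) :
    swapMap n σ ∈ Ugen n g := by
  rw [Ugen_iff] at *
  refine ⟨g_swap _ _ _ (beta_sq_rho n) h.1, ?_⟩
  unfold swapMap
  rw [g_swap_r _ _ _ (rho_mul_self n) h.1, numCycles_conj', numCycles_inv,
    mul_assoc _ (rho n), numCycles_conj', ← numCycles_inv, mul_inv_rev, inv_inv,
    g_rinv _ (rho_mul_self n), add_comm (numCycles _ _)]
  exact h.2

/-- The action of the centralizer of `ρ` on the `n` pairs. -/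
def barFun (n : ℕ) (ξ : Perm (Fin (2 * n))) (k : Fin n) : Fin n :=
  ⟨(ξ ⟨2 * k.val, by omega⟩).val / 2, by omega⟩

theorem comm_div {n : ℕ} {ξ : Perm (Fin (2 * n))} (h : ξ * rho n = rho n * ξ)
    (x : Fin (2 * n)) : (ξ ⟨2 * (x.val / 2), by omega⟩).val / 2 = (ξ x).val / 2 := by
  rcases Nat.mod_two_eq_zero_or_one x.val with h0 | h0
  · congr 3
    apply Fin.ext
    dsimp only
    omega
  · have e : (⟨2 * (x.val / 2), by omega⟩ : Fin (2 * n)) = rho n x := by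
      apply Fin.ext
      rw [rho_val]
      dsimp only
      rw [if_neg (by omega)]
      omega
    rw [e, ← Perm.mul_apply, h, Perm.mul_apply, rho_val]
    split_ifs <;> omega

/-- The homomorphism to permutations of the pairs. -/
def barHom (n : ℕ) : Subgroup.centralizer {rho n} →* Perm (Fin n) :=
  MonoidHom.toHomPerm
    { toFun := fun ξ => barFun n ξ.1
      map_one' := by
        funext k
        apply Fin.ext
        change (2 * k.val) / 2 = k.val
        omega
      map_mul' := by
        intro ξ η
        funext k
        apply Fin.ext
        have h := comm_div (Subgroup.mem_centralizer_singleton_iff.1 ξ.2) (η.1 ⟨2 * k.val, by omega⟩)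
        exact h.symm }

theorem barHom_val (n : ℕ) (ξ : Subgroup.centralizer {rho n}) (k : Fin n) :
    (barHom n ξ k).val = (ξ.1 ⟨2 * k.val, by omega⟩).val / 2 := rfl

theorem barHom_rho (n : ℕ) (h : rho n ∈ Subgroup.centralizer {rho n}) :
    barHom n ⟨rho n, h⟩ = 1 := by
  ext k
  rw [barHom_val]
  simp only [rho_val, Perm.one_apply]
  split_ifs <;> omega

theorem barHom_beta (n : ℕ) (h : finRotate (2 * n) ^ 2 ∈ Subgroup.centralizer {rho n}) :
    barHom n ⟨finRotate (2 * n) ^ 2, h⟩ = finRotate n := by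
  ext k
  rw [barHom_val]
  simp only [pow_two, Perm.mul_apply, finRotate_val]
  split_ifs <;> omega

/-- The sign of the induced permutation of pairs. -/
def bsign (n g : ℕ) (σ : Ugen n g) : ℤˣ :=
  Perm.sign (barHom n ⟨(finRotate (2 * n))⁻¹ * σ.1,
    Subgroup.mem_centralizer_singleton_iff.2 ((Ugen_iff n g σ.1).1 σ.2).1.symm⟩)

theorem rho_memC (n : ℕ) : rho n ∈ Subgroup.centralizer {rho n} :=
  Subgroup.mem_centralizer_singleton_iff.2 rfl

theorem beta_memC (n : ℕ) : finRotate (2 * n) ^ 2 ∈ Subgroup.centralizer {rho n} :=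
  Subgroup.mem_centralizer_singleton_iff.2 (beta_sq_rho n)

theorem sigma_memC {n g : ℕ} (σ : Ugen n g) :
    (finRotate (2 * n))⁻¹ * σ.1 ∈ Subgroup.centralizer {rho n} :=
  Subgroup.mem_centralizer_singleton_iff.2 ((Ugen_iff n g σ.1).1 σ.2).1.symm

theorem bsign_conj (n g : ℕ) (σ : Ugen n g) :
    bsign n g ⟨conjB2 n σ.1, conj_mem σ.2⟩ = bsign n g σ := by
  unfold bsign
  have : (⟨(finRotate (2 * n))⁻¹ * conjB2 n σ.1, sigma_memC ⟨_, conj_mem σ.2⟩⟩ :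
      Subgroup.centralizer {rho n}) = ⟨_, beta_memC n⟩ * ⟨_, sigma_memC σ⟩ * ⟨_, beta_memC n⟩⁻¹ := by
    apply Subtype.ext
    simp only [conjB2, Subgroup.coe_mul, Subgroup.coe_inv]
    group
  rw [this, map_mul (barHom n), map_mul (barHom n), map_inv (barHom n), Perm.sign_mul, Perm.sign_mul, Perm.sign_inv, mul_right_comm,
    Int.units_mul_self, one_mul]

theorem bsign_mirror (n g : ℕ) (σ : Ugen n g) :
    bsign n g ⟨mirrorMap n σ.1, mirror_mem σ.2⟩ = bsign n g σ := by
  unfold bsign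
  have : (⟨(finRotate (2 * n))⁻¹ * mirrorMap n σ.1, sigma_memC ⟨_, mirror_mem σ.2⟩⟩ :
      Subgroup.centralizer {rho n}) = ⟨_, sigma_memC σ⟩ * ⟨_, rho_memC n⟩ := by
    apply Subtype.ext
    simp only [mirrorMap, Subgroup.coe_mul, mul_assoc]
  rw [this, map_mul, barHom_rho, mul_one]

theorem bsign_swap (n g : ℕ) (hn : 1 ≤ n) (he : Even n) (σ : Ugen n g) :
    bsign n g ⟨swapMap n σ.1, swap_mem σ.2⟩ = - bsign n g σ := by
  unfold bsign
  have : (⟨(finRotate (2 * n))⁻¹ * swapMap n σ.1, sigma_memC ⟨_, swap_mem σ.2⟩⟩ :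
      Subgroup.centralizer {rho n}) =
        ⟨_, beta_memC n⟩⁻¹ * ⟨_, rho_memC n⟩ * ⟨_, sigma_memC σ⟩⁻¹ := by
    apply Subtype.ext
    simp only [swapMap, Subgroup.coe_mul, Subgroup.coe_inv]
    exact g_swap_eq _ _ _
  have hs : Perm.sign (finRotate n) = -1 := by
    obtain ⟨m, rfl⟩ : ∃ m, n = m + 1 := ⟨n - 1, by omega⟩
    rw [sign_finRotate]
    exact Odd.neg_one_pow (by rcases he with ⟨k, hk⟩; exact ⟨k - 1, by omega⟩)
  rw [this, map_mul (barHom n), map_mul (barHom n), map_inv (barHom n), map_inv (barHom n),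
    barHom_rho, barHom_beta, mul_one, Perm.sign_mul,
    Perm.sign_inv, Perm.sign_inv, hs, neg_one_mul]

theorem sign_conj (n : ℕ) (σ : Perm (Fin (2 * n))) :
    Perm.sign (conjB2 n σ) = Perm.sign σ := by
  unfold conjB2
  rw [Perm.sign_mul, Perm.sign_mul, Perm.sign_inv, mul_right_comm, Int.units_mul_self, one_mul]

theorem sign_mirror (n : ℕ) (ho : Odd n) (σ : Perm (Fin (2 * n))) :
    Perm.sign (mirrorMap n σ) = - Perm.sign σ := by
  unfold mirrorMap
  rw [Perm.sign_mul, sign_rho, ho.neg_one_pow, mul_neg_one]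

theorem sign_swap' (n : ℕ) (ho : Odd n) (σ : Perm (Fin (2 * n))) :
    Perm.sign (swapMap n σ) = - Perm.sign σ := by
  unfold swapMap
  rw [Perm.sign_mul, Perm.sign_mul, Perm.sign_mul, sign_rho, ho.neg_one_pow, Perm.sign_inv,
    Perm.sign_inv, mul_neg_one, neg_mul, neg_mul, mul_right_comm, Int.units_mul_self, one_mul]

theorem conj_mirror (n : ℕ) (σ : Perm (Fin (2 * n))) :
    conjB2 n (mirrorMap n σ) = mirrorMap n (conjB2 n σ) := g_conj_mirror _ _ _ (beta_sq_rho n)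

theorem swap_conj (n : ℕ) (σ : Perm (Fin (2 * n))) :
    swapMap n (conjB2 n σ) = conjB2 n (swapMap n σ) := g_swap_conj _ _ _ (beta_sq_rho n)

theorem swap_mirror {n g : ℕ} (σ : Ugen n g) :
    swapMap n (mirrorMap n σ.1) = mirrorMap n (swapMap n σ.1) :=
  g_swap_mirror _ _ _ (rho_mul_self n) ((Ugen_iff n g σ.1).1 σ.2).1

theorem conj_swap_swap {n g : ℕ} (σ : Ugen n g) :
    conjB2 n (swapMap n (swapMap n σ.1)) = σ.1 :=
  g_swap_swap _ _ _ (rho_mul_self n) ((Ugen_iff n g σ.1).1 σ.2).1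

theorem mirror_mirror (n : ℕ) (σ : Perm (Fin (2 * n))) :
    mirrorMap n (mirrorMap n σ) = σ := by
  unfold mirrorMap
  rw [mul_assoc, rho_mul_self, mul_one]

/-- Theorem 4, relation for OUc: `|OUc| = 2·|OUb|` for n even and `|OUc| = |OOb|`
for n odd. -/
theorem OUc_relations (n : ℕ) (hn : 1 ≤ n) (g : ℕ) :
    (Even n →
      numClasses n (Ugen n g) {conjB2 n, mirrorMap n}
        = 2 * numClasses n (Ugen n g) {conjB2 n, mirrorMap n, swapMap n}) ∧
    (Odd n →
      numClasses n (Ugen n g) {conjB2 n, mirrorMap n}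
        = numClasses n (Ugen n g) {conjB2 n, swapMap n}) := by
  constructor
  · intro he
    unfold numClasses
    apply card_quot_two _ _ (fun σ => ⟨swapMap n σ.1, swap_mem σ.2⟩) (bsign n g)
    · intro a b
      simp [Subtype.ext_iff, or_assoc]
    · rintro a b ⟨f, rfl | rfl, hb⟩
      · refine Quot.sound ⟨_, Or.inl rfl, ?_⟩
        simp only [hb, swap_conj]
      · refine Quot.sound ⟨_, Or.inr rfl, ?_⟩
        simp only [hb, swap_mirror]
    · intro a
      exact Quot.sound ⟨_, Or.inl rfl, (conj_swap_swap a).symm⟩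
    · rintro a ⟨b, hb'⟩ ⟨f, rfl | rfl, hb⟩
      · dsimp only at hb
        subst hb
        exact (bsign_conj n g a).symm
      · dsimp only at hb
        subst hb
        exact (bsign_mirror n g a).symm
    · exact bsign_swap n g hn he
  · intro ho
    have h1 : numClasses n (Ugen n g) {conjB2 n} =
        2 * numClasses n (Ugen n g) {conjB2 n, mirrorMap n} := by
      unfold numClasses
      apply card_quot_two _ _ (fun σ => ⟨mirrorMap n σ.1, mirror_mem σ.2⟩)
        (fun σ => Perm.sign σ.1)
      · intro a b
        simp [Subtype.ext_iff]
      · rintro a b ⟨f, rfl, hb⟩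
        refine Quot.sound ⟨_, rfl, ?_⟩
        simp only [hb, conj_mirror]
      · intro a
        simp only [mirror_mirror]
      · rintro a b ⟨f, rfl, hb⟩
        simp only [hb, sign_conj]
      · exact fun a => sign_mirror n ho a.1
    have h2 : numClasses n (Ugen n g) {conjB2 n} =
        2 * numClasses n (Ugen n g) {conjB2 n, swapMap n} := by
      unfold numClasses
      apply card_quot_two _ _ (fun σ => ⟨swapMap n σ.1, swap_mem σ.2⟩)
        (fun σ => Perm.sign σ.1)
      · intro a b
        simp [Subtype.ext_iff]
      · rintro a b ⟨f, rfl, hb⟩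
        refine Quot.sound ⟨_, rfl, ?_⟩
        simp only [hb, swap_conj]
      · intro a
        exact Quot.sound ⟨_, rfl, (conj_swap_swap a).symm⟩
      · rintro a b ⟨f, rfl, hb⟩
        simp only [hb, sign_conj]
      · exact fun a => sign_swap' n ho a.1
    omega
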